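/- Suppose ε is not identically zero. Then there exists a (1,∞)-atom a on (T,μ) such that Σ_{x∈T} |𝓡_ε* a(x)| μ(x) = +∞, where 𝓡_ε* a(x) = Σ_{y∈T} K(x,y) ∇_ε* a(y) μ(y); in particular, the adjoint ε-horizontal Riesz transform 𝓡_ε* does not map the atomic Hardy space H¹(μ) into L¹(μ). -/

import Mathlib

open MeasureTheory ENNReal Set Function
open scoped NNReal ENNReal Classical

noncomputable section

/-- A homogeneous tree of degree `q+1` with a distinguished end (mythical ancestor),
encoded through its graph distance `dist`, horocyclic level function `level`,
and predecessor map `pred`. -/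
structure FlowTree (q : ℕ) where
  V : Type
  countableV : Countable V
  dist : V → V → ℕ
  level : V → ℤ
  pred : V → V
  dist_self : ∀ x, dist x x = 0
  eq_of_dist_eq_zero : ∀ x y, dist x y = 0 → x = y
  dist_comm : ∀ x y, dist x y = dist y x
  dist_triangle : ∀ x y z, dist x z ≤ dist x y + dist y z
  level_pred : ∀ x, level (pred x) = level x + 1
  succ_finite : ∀ x, Set.Finite {y | pred y = x}
  succ_card : ∀ x, Nat.card {y // pred y = x} = q
  dist_le : ∀ (x y : V) (n m : ℕ), pred^[n] x = pred^[m] y → dist x y ≤ n + m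
  dist_spec : ∀ x y, ∃ n m : ℕ, pred^[n] x = pred^[m] y ∧ n + m = dist x y

namespace FlowTree

variable {q : ℕ} (S : FlowTree q)

/-- The canonical flow measure weight `μ(x) = q^{ℓ(x)}`, as an extended nonnegative real. -/
def w (x : S.V) : ℝ≥0∞ := (q : ℝ≥0∞) ^ ((S.level x : ℤ) : ℝ)

/-- The canonical flow measure weight `μ(x) = q^{ℓ(x)}`, as a real number. -/
def wR (x : S.V) : ℝ := (q : ℝ) ^ (S.level x)

/-- The canonical flow measure of a set `E ⊆ T`. -/
def muS (E : Set S.V) : ℝ≥0∞ := ∑' x : E, S.w x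

/-- The `L^p(μ)` (quasi)norm, `p ∈ [1,∞]`. -/
def lpNorm (p : ℝ≥0∞) {E : Type*} [NNNorm E] (f : S.V → E) : ℝ≥0∞ :=
  if p = ∞ then ⨆ x, (‖f x‖₊ : ℝ≥0∞)
  else (∑' x, (‖f x‖₊ : ℝ≥0∞) ^ p.toReal * S.w x) ^ (1 / p.toReal)

/-- The weak `L^{1,∞}(μ)` quasinorm `sup_{λ>0} λ · μ({|f| > λ})`. -/
def wkNorm {E : Type*} [NNNorm E] (f : S.V → E) : ℝ≥0∞ :=
  ⨆ t : ℝ≥0, (t : ℝ≥0∞) * S.muS {x | t < ‖f x‖₊}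

/-- `Σf(x) = f(𝔭(x))`. -/
def sig (f : S.V → ℂ) : S.V → ℂ := fun x => f (S.pred x)

/-- `Σ*f(x) = (1/q) Σ_{y ∈ succ(x)} f(y)`. -/
def sigStar (f : S.V → ℂ) : S.V → ℂ :=
  fun x => (q : ℂ)⁻¹ * ∑' y : {y | S.pred y = x}, f y.1

/-- The flow gradient `∇ = id − Σ`. -/
def grad (f : S.V → ℂ) : S.V → ℂ := fun x => f x - f (S.pred x)

/-- `∇* = id − Σ*`. -/
def gradStar (f : S.V → ℂ) : S.V → ℂ := fun x => f x - S.sigStar f x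

/-- The modulus of the gradient `Df(x) = Σ_{y ∼ x} |f(x) − f(y)|`. -/
def Dmod (f : S.V → ℂ) : S.V → ℝ :=
  fun x => ∑' y : {y | S.dist x y = 1}, ‖f x - f y.1‖

/-- `Σ̃_n = Σ^n` for `n ≥ 0` and `(Σ*)^{−n}` for `n < 0`. -/
def sigTilde (n : ℤ) (f : S.V → ℂ) : S.V → ℂ :=
  if 0 ≤ n then (S.sig)^[n.toNat] f else (S.sigStar)^[(-n).toNat] f

/-- `Σ*` acting on real-valued functions. -/
def sigStarR (f : S.V → ℝ) : S.V → ℝ :=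
  fun x => (q : ℝ)⁻¹ * ∑' y : {y | S.pred y = x}, f y.1

/-- The flow Laplacian `𝓛 = id − (Σ + Σ*)/2`, acting pointwise on real functions. -/
def lapR (f : S.V → ℝ) : S.V → ℝ :=
  fun x => f x - (f (S.pred x) + S.sigStarR f x) / 2

/-- `δ_y/μ(y)`, the normalized delta at `y`. -/
def deltaMu (y : S.V) : S.V → ℝ := fun z => if z = y then (S.wR y)⁻¹ else 0

/-- The heat kernel `H_t(x,y)` of the flow Laplacian, i.e. `(e^{−t𝓛} (δ_y/μ(y)))(x)`
computed via the exponential power series of the bounded operator `𝓛`. -/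
def Hker (t : ℝ) (x y : S.V) : ℝ :=
  ∑' n : ℕ, ((-t) ^ n / (n.factorial : ℝ)) * ((S.lapR)^[n] (S.deltaMu y)) x

/-- The integral kernel `K(x,y)` of `𝓛^{−1/2}`, by subordination. -/
def Kker (x y : S.V) : ℝ :=
  (Real.sqrt Real.pi)⁻¹ * ∫ t in Set.Ioi (0 : ℝ), S.Hker t x y * t ^ (-(1 : ℝ)/2)

/-- The Riesz transform `𝓡 = ∇𝓛^{−1/2}`, defined on finitely supported functions. -/
def riesz (f : S.V → ℂ) : S.V → ℂ :=
  fun x => ∑' y, ((S.Kker x y - S.Kker (S.pred x) y : ℝ) : ℂ) * f y * (S.wR y : ℂ)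

/-- The integral operator with almost-radial kernel `q^{−ℓ(x)/2} G(d(x,y)) q^{−ℓ(y)/2}`. -/
def kernelOp (G : ℕ → ℂ) (f : S.V → ℂ) : S.V → ℂ :=
  fun x => ∑' y, (((q : ℝ) ^ (-((S.level x : ℤ) : ℝ)/2) * (q : ℝ) ^ (-((S.level y : ℤ) : ℝ)/2) : ℝ) : ℂ)
    * G (S.dist x y) * f y * (S.wR y : ℂ)

/-- The ε-horizontal gradient `∇_ε f(x) = (1/q) Σ_{y ∈ succ(x)} ε(y) f(y)`. -/
def hgrad (ε f : S.V → ℂ) : S.V → ℂ :=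
  fun x => (q : ℂ)⁻¹ * ∑' y : {y | S.pred y = x}, ε y.1 * f y.1

/-- The adjoint ε-horizontal gradient `∇_ε* f(x) = conj(ε(x)) f(𝔭(x))`. -/
def hgradStar (ε f : S.V → ℂ) : S.V → ℂ :=
  fun x => (starRingEnd ℂ) (ε x) * f (S.pred x)

/-- `‖ε‖_∞`. -/
def epsSup (ε : S.V → ℂ) : ℝ≥0∞ := ⨆ x, (‖ε x‖₊ : ℝ≥0∞)

/-- The `L²(μ)` inner product. -/
def inner2 (f g : S.V → ℂ) : ℂ := ∑' x, f x * (starRingEnd ℂ) (g x) * (S.wR x : ℂ)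

/-- `y ≤ x` iff `d(x,y) = ℓ(x) − ℓ(y)`. -/
def le' (y x : S.V) : Prop := (S.dist x y : ℤ) = S.level x - S.level y

/-- Admissible trapezoids of `(T,μ)`. -/
def IsAdmissibleTrapezoid (F : Set S.V) : Prop :=
  (∃ x, F = {x}) ∨
  ∃ (x₀ : S.V) (h1 h2 : ℕ), 0 < h1 ∧ 2 * h1 ≤ h2 ∧ h2 ≤ 12 * h1 ∧
    F = {x | S.le' x x₀ ∧ S.level x₀ - (h2 : ℤ) < S.level x ∧ S.level x ≤ S.level x₀ - (h1 : ℤ)}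

/-- `(1,∞)`-atoms of `(T,μ)`. -/
def IsOneInftyAtom (a : S.V → ℂ) : Prop :=
  ∃ F : Set S.V, S.IsAdmissibleTrapezoid F ∧ Function.support a ⊆ F ∧
    (∑' x, a x * (S.wR x : ℂ)) = 0 ∧ ∀ x, (‖a x‖₊ : ℝ≥0∞) ≤ (S.muS F)⁻¹

end FlowTree

namespace ZRiesz

/-- The discrete Laplacian on `ℤ`. -/
def deltaZ (F : ℤ → ℝ) : ℤ → ℝ := fun n => F n - (F (n + 1) + F (n - 1)) / 2

/-- The heat kernel `h_t^ℤ = e^{−tΔ_ℤ} δ_0` on `ℤ`, via the exponential power series. -/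
def heatZ (t : ℝ) (n : ℤ) : ℝ :=
  ∑' k : ℕ, ((-t) ^ k / (k.factorial : ℝ)) *
    (deltaZ^[k] (fun m => if m = 0 then (1 : ℝ) else 0)) n

/-- Kernel of the Riesz transform on `ℤ`: `k_ℤ(n) = π^{−1/2} ∫₀^∞ (∇_ℤ h_t^ℤ)(n) t^{−1/2} dt`. -/
def kZ (n : ℤ) : ℝ :=
  (Real.sqrt Real.pi)⁻¹ * ∫ t in Set.Ioi (0 : ℝ), (heatZ t n - heatZ t (n + 1)) * t ^ (-(1 : ℝ)/2)

/-- Kernel of the skew-symmetric part: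
`k̃_ℤ(n) = π^{−1/2} ∫₀^∞ (∇̃_ℤ h_t^ℤ)(n) t^{−1/2} dt`. -/
def ktZ (n : ℤ) : ℝ :=
  (Real.sqrt Real.pi)⁻¹ *
    ∫ t in Set.Ioi (0 : ℝ), (heatZ t (n - 1) - heatZ t (n + 1)) * t ^ (-(1 : ℝ)/2)

/-- The closed formula `k̃_ℤ(m) = (2√2/π) m/(m² − 1/4)`. -/
def ktZc (m : ℤ) : ℝ := (2 * Real.sqrt 2 / Real.pi) * (m : ℝ) / ((m : ℝ) ^ 2 - 1/4)

/-- `G(n) = Σ_{k≥0} q^{−(n+2k)/2} k̃_ℤ(n+2k+1)` (subordination kernel version). -/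
def Gint (q : ℕ) (n : ℕ) : ℝ :=
  ∑' k : ℕ, (q : ℝ) ^ (-(((n : ℝ)) + 2 * (k : ℝ))/2) * ktZ ((n : ℤ) + 2 * (k : ℤ) + 1)

/-- `G(n) = Σ_{k≥0} q^{−(n+2k)/2} k̃_ℤ(n+2k+1)` (closed formula version). -/
def Gc (q : ℕ) (n : ℕ) : ℝ :=
  ∑' k : ℕ, (q : ℝ) ^ (-(((n : ℝ)) + 2 * (k : ℝ))/2) * ktZc ((n : ℤ) + 2 * (k : ℤ) + 1)

/-- The `ℓ^p(ℤ)` norm. -/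
def zlpNorm (p : ℝ≥0∞) (F : ℤ → ℂ) : ℝ≥0∞ :=
  if p = ∞ then ⨆ n, (‖F n‖₊ : ℝ≥0∞)
  else (∑' n : ℤ, (‖F n‖₊ : ℝ≥0∞) ^ p.toReal) ^ (1 / p.toReal)

/-- The `ℓ^{1,∞}(ℕ)` quasinorm. -/
def natWk (F : ℕ → ℂ) : ℝ≥0∞ :=
  ⨆ t : ℝ≥0, (t : ℝ≥0∞) * ∑' (_ : {n : ℕ | t < ‖F n‖₊}), (1 : ℝ≥0∞)

end ZRiesz

/-- The punctured boundary `Ω = ∂T \ {ω_*}` of the tree, together with the measure `ν`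
with `ν(Ω_x) = q^{ℓ(x)}`.  `vert ω n` is the vertex `ω_n` of level `n` on the geodesic
`[ω, ω_*]`. -/
structure FlowTreeBoundary {q : ℕ} (S : FlowTree q) where
  Ω : Type
  mΩ : MeasurableSpace Ω
  ν : @MeasureTheory.Measure Ω mΩ
  vert : Ω → ℤ → S.V
  level_vert : ∀ ω n, S.level (vert ω n) = n
  pred_vert : ∀ ω n, S.pred (vert ω n) = vert ω (n + 1)
  vert_surj : ∀ x : S.V, ∃ ω, vert ω (S.level x) = x
  vert_inj : ∀ ω ω', (∀ n, vert ω n = vert ω' n) → ω = ω'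
  meas_cone : ∀ x : S.V, @MeasurableSet Ω mΩ {ω | vert ω (S.level x) = x}
  nu_cone : ∀ x : S.V, ν {ω | vert ω (S.level x) = x} = (q : ℝ≥0∞) ^ ((S.level x : ℤ) : ℝ)

attribute [instance] FlowTreeBoundary.mΩ

namespace FlowTreeBoundary

variable {q : ℕ} {S : FlowTree q} (B : FlowTreeBoundary S)

/-- The product measure `ν × #` on `Ω × ℤ`. -/
def pm : MeasureTheory.Measure (B.Ω × ℤ) := B.ν.prod MeasureTheory.Measure.count

/-- `Ω_x = {ω : x ∈ [ω, ω_*]}`. -/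
def cone (x : S.V) : Set B.Ω := {ω | B.vert ω (S.level x) = x}

/-- The lifting operator `Φf(ω,n) = f(ω_n)`. -/
def lift (f : S.V → ℂ) : B.Ω × ℤ → ℂ := fun p => f (B.vert p.1 p.2)

/-- The lifting operator on `ℝ≥0∞`-valued functions. -/
def liftNN (f : S.V → ℝ≥0∞) : B.Ω × ℤ → ℝ≥0∞ := fun p => f (B.vert p.1 p.2)

/-- The adjoint `Φ*g(x) = ν(Ω_x)^{−1} ∫_{Ω_x} g(ω, ℓ(x)) dν(ω)`. -/
def liftStar (g : B.Ω × ℤ → ℂ) : S.V → ℂ :=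
  fun x => ((B.ν (B.cone x)).toReal)⁻¹ * ∫ ω in B.cone x, g (ω, S.level x) ∂B.ν

/-- The adjoint `Φ*` on `ℝ≥0∞`-valued functions. -/
def liftStarNN (g : B.Ω × ℤ → ℝ≥0∞) : S.V → ℝ≥0∞ :=
  fun x => (B.ν (B.cone x))⁻¹ * ∫⁻ ω in B.cone x, g (ω, S.level x) ∂B.ν

end FlowTreeBoundary

/-- The weak `L^{1,∞}(μ)` quasinorm with respect to a measure. -/
def wkMeas {α : Type*} [MeasurableSpace α] (μ : MeasureTheory.Measure α) (g : α → ℂ) : ℝ≥0∞ :=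
  ⨆ t : ℝ≥0, (t : ℝ≥0∞) * μ {a | t < ‖g a‖₊}

/-- The weak `L^{1,∞}(μ)` quasinorm for `ℝ≥0∞`-valued functions. -/
def wkMeasNN {α : Type*} [MeasurableSpace α] (μ : MeasureTheory.Measure α) (g : α → ℝ≥0∞) :
    ℝ≥0∞ :=
  ⨆ t : ℝ≥0, (t : ℝ≥0∞) * μ {a | (t : ℝ≥0∞) < g a}

end

/-- The `n`-step kernel, started at `0`, of the simple random walk on `ℕ` killed at `-1`. -/
noncomputable def killedWalk : ℕ → ℕ → ℝ
  | 0, 0 => 1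
  | 0, _ + 1 => 0
  | n + 1, 0 => killedWalk n 1 / 2
  | n + 1, j + 1 => (killedWalk n j + killedWalk n (j + 2)) / 2

namespace killedWalk

lemma nonneg (n j : ℕ) : 0 ≤ killedWalk n j := by
  induction n generalizing j with
  | zero => cases j <;> simp [killedWalk]
  | succ n ih =>
    cases j with
    | zero => simp only [killedWalk]; linarith [ih 1]
    | succ j => simp only [killedWalk]; linarith [ih j, ih (j + 2)]

lemma eq_zero_of_lt {n j : ℕ} (h : n < j) : killedWalk n j = 0 := by
  induction n generalizing j with
  | zero =>
    cases j with
    | zero => omega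
    | succ j => simp [killedWalk]
  | succ n ih =>
    cases j with
    | zero => omega
    | succ j => simp [killedWalk, ih (show n < j by omega), ih (show n < j + 2 by omega)]

/-- One step of the killed walk, tested against a function vanishing at the killing site. -/
lemma sum_succ {E : Type*} [AddCommGroup E] [Module ℝ E] (V : ℕ → E) (hV : V 0 = 0) (n : ℕ) :
    ∑ j ∈ Finset.range (n + 2), killedWalk (n + 1) j • V (j + 1) =
      (1 / 2 : ℝ) • ∑ j ∈ Finset.range (n + 1), killedWalk n j • (V (j + 2) + V j) := by
  have h1 : ∑ j ∈ Finset.range (n + 1), killedWalk n (j + 2) • V (j + 2) + killedWalk n 1 • V 1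
      = ∑ j ∈ Finset.range (n + 1), killedWalk n j • V j := by
    have h2 : ∑ j ∈ Finset.range (n + 3), killedWalk n j • V j
        = ∑ j ∈ Finset.range (n + 1), killedWalk n j • V j := by
      rw [Finset.sum_range_succ, Finset.sum_range_succ, eq_zero_of_lt (show n < n + 2 by omega),
        eq_zero_of_lt (show n < n + 1 by omega)]
      simp
    rw [← h2, Finset.sum_range_succ' _ (n + 2), Finset.sum_range_succ' _ (n + 1), hV]
    simp
  have h3 : ∀ j, killedWalk (n + 1) (j + 1) • V (j + 1 + 1) =
      (1 / 2 : ℝ) • (killedWalk n j • V (j + 2) + killedWalk n (j + 2) • V (j + 2)) := by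
    intro j
    rw [← add_smul, smul_smul]
    simp only [killedWalk]
    congr 1
    ring
  have h4 : killedWalk (n + 1) 0 • V (0 + 1) = (1 / 2 : ℝ) • killedWalk n 1 • V 1 := by
    rw [smul_smul]
    simp only [killedWalk, zero_add]
    congr 1
    ring
  rw [Finset.sum_range_succ', Finset.sum_congr rfl fun j _ => h3 j, h4, ← Finset.smul_sum,
    ← smul_add, Finset.sum_add_distrib, add_assoc, h1, ← Finset.sum_add_distrib]
  simp only [smul_add]

lemma sum_first_moment (n : ℕ) :
    ∑ j ∈ Finset.range (n + 1), killedWalk n j * ((j : ℝ) + 1) = 1 := by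
  induction n with
  | zero => simp [killedWalk]
  | succ n ih =>
    have h := sum_succ (fun j : ℕ => (j : ℝ)) (by simp) n
    simp only [smul_eq_mul, Nat.cast_add, Nat.cast_one, Nat.cast_ofNat] at h
    refine (h.trans ?_).trans ih
    rw [Finset.mul_sum]
    exact Finset.sum_congr rfl fun j _ => by ring

lemma sum_third_moment (n : ℕ) :
    ∑ j ∈ Finset.range (n + 1), killedWalk n j * ((j : ℝ) + 1) ^ 3 = 3 * (n : ℝ) + 1 := by
  induction n with
  | zero => simp [killedWalk]
  | succ n ih =>
    have h := sum_succ (fun j : ℕ => (j : ℝ) ^ 3) (by simp) n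
    simp only [smul_eq_mul, Nat.cast_add, Nat.cast_one, Nat.cast_ofNat] at h
    have h' : (3 * ((n + 1 : ℕ) : ℝ) + 1) = (3 * n + 1) + 3 * 1 := by push_cast; ring
    rw [h', ← ih]
    refine h.trans ?_
    have h'' : (3 : ℝ) * 1 = 3 * ∑ j ∈ Finset.range (n + 1), killedWalk n j * ((j : ℝ) + 1) := by
      rw [sum_first_moment]
    rw [h'', Finset.mul_sum, Finset.mul_sum, ← Finset.sum_add_distrib]
    exact Finset.sum_congr rfl fun j _ => by ring

/-- The survival probability of the killed walk decays at most like `n ^ (-1/2)`. -/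
lemma sum_ge (n : ℕ) :
    1 / (6 * √((n : ℝ) + 1)) ≤ ∑ j ∈ Finset.range (n + 1), killedWalk n j := by
  set s := √((n : ℝ) + 1) with hs
  have hs2 : s ^ 2 = n + 1 := Real.sq_sqrt (by positivity)
  have hs0 : 0 < s := Real.sqrt_pos.2 (by positivity)
  have key : ∀ u : ℝ, 0 ≤ u → u ≤ 3 * s + u ^ 3 / (9 * s ^ 2) := by
    intro u hu
    rcases le_total u (3 * s) with h | h
    · have : 0 ≤ u ^ 3 / (9 * s ^ 2) := by positivity
      linarith
    · have : u ≤ u ^ 3 / (9 * s ^ 2) := by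
        rw [le_div_iff₀ (by positivity)]
        nlinarith [mul_le_mul h h (by positivity) hu]
      linarith
  have h1 : (1 : ℝ) ≤ 3 * s * ∑ j ∈ Finset.range (n + 1), killedWalk n j
      + (3 * n + 1) / (9 * s ^ 2) := by
    refine (sum_first_moment n).symm.le.trans ?_
    rw [← sum_third_moment n, Finset.mul_sum, Finset.sum_div,
      ← Finset.sum_add_distrib]
    refine Finset.sum_le_sum fun j _ => ?_
    have := mul_le_mul_of_nonneg_left (key ((j : ℝ) + 1) (by positivity)) (nonneg n j)
    calc _ ≤ _ := this
      _ = _ := by ring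
  have h2 : (3 * n + 1) / (9 * s ^ 2) ≤ (1 / 2 : ℝ) := by
    rw [hs2, div_le_iff₀ (by positivity)]
    have : (0 : ℝ) ≤ n := by positivity
    linarith
  rw [div_le_iff₀ (by positivity)]
  linarith

end killedWalk

/-- The `n`-th Taylor coefficient of `(1 - z) ^ (-1/2)`. -/
noncomputable def invSqrtCoeff (n : ℕ) : ℝ := (√Real.pi)⁻¹ * (Real.Gamma (n + 1 / 2) / n.factorial)

namespace invSqrtCoeff

lemma zero_eq : invSqrtCoeff 0 = 1 := by
  have : √Real.pi ≠ 0 := (Real.sqrt_pos.2 Real.pi_pos).ne'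
  simp only [invSqrtCoeff, Nat.cast_zero, zero_add, Real.Gamma_one_half_eq, Nat.factorial_zero]
  field_simp
  simp

lemma succ_eq (n : ℕ) :
    invSqrtCoeff (n + 1) = invSqrtCoeff n * ((2 * n + 1) / (2 * n + 2)) := by
  have h : Real.Gamma ((n + 1 : ℕ) + 1 / 2) = (n + 1 / 2) * Real.Gamma (n + 1 / 2) := by
    rw [← Real.Gamma_add_one (by positivity)]
    congr 1
    push_cast
    ring
  have : √Real.pi ≠ 0 := (Real.sqrt_pos.2 Real.pi_pos).ne'
  simp only [invSqrtCoeff]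
  rw [h, Nat.factorial_succ]
  push_cast
  field_simp

lemma pos (n : ℕ) : 0 < invSqrtCoeff n := by
  induction n with
  | zero => rw [zero_eq]; exact one_pos
  | succ n ih => rw [succ_eq]; positivity

lemma le_one (n : ℕ) : invSqrtCoeff n ≤ 1 := by
  induction n with
  | zero => rw [zero_eq]
  | succ n ih =>
    rw [succ_eq]
    refine mul_le_one₀ ih (by positivity) ?_
    rw [div_le_one (by positivity)]
    linarith

lemma ge (n : ℕ) : 1 / (2 * √((n : ℝ) + 1)) ≤ invSqrtCoeff n := by
  have h : ∀ n : ℕ, 1 / (4 * n + 1 : ℝ) ≤ invSqrtCoeff n ^ 2 := by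
    intro n
    induction n with
    | zero => simp [zero_eq]
    | succ n ih =>
      rw [succ_eq, mul_pow]
      refine le_trans ?_ (mul_le_mul_of_nonneg_right ih (by positivity))
      rw [div_pow, div_mul_div_comm, div_le_div_iff₀ (by positivity) (by positivity)]
      push_cast
      nlinarith
  refine le_of_sq_le_sq ?_ (pos n).le
  refine le_trans ?_ (h n)
  rw [div_pow, mul_pow, Real.sq_sqrt (by positivity)]
  rw [div_le_div_iff₀ (by positivity) (by positivity)]
  linarith

end invSqrtCoeff

/-- The coefficients of `(1 - z) ^ (-1/2)` are not summable against the survival probabilities. -/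
lemma tsum_invSqrtCoeff_mul_killedWalk :
    ∑' N : ℕ, ∑' n : ℕ, ENNReal.ofReal (invSqrtCoeff n * killedWalk n N) = ∞ := by
  rw [ENNReal.tsum_comm]
  by_contra hfin
  have h : ∀ n : ℕ, ENNReal.ofReal (1 / 12 * (1 / ((n + 1 : ℕ) : ℝ)))
      ≤ ∑' N : ℕ, ENNReal.ofReal (invSqrtCoeff n * killedWalk n N) := by
    intro n
    refine le_trans ?_ (ENNReal.sum_le_tsum (Finset.range (n + 1)))
    rw [← ENNReal.ofReal_sum_of_nonneg
      fun j _ => mul_nonneg (invSqrtCoeff.pos n).le (killedWalk.nonneg n j), ← Finset.mul_sum]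
    refine ENNReal.ofReal_le_ofReal ?_
    refine le_trans (le_of_eq ?_) (mul_le_mul (invSqrtCoeff.ge n) (killedWalk.sum_ge n)
      (by positivity) (invSqrtCoeff.pos n).le)
    have h1 : √((n : ℝ) + 1) * √((n : ℝ) + 1) = n + 1 := Real.mul_self_sqrt (by positivity)
    rw [div_mul_div_comm, div_mul_div_comm, show 2 * √((n : ℝ) + 1) * (6 * √((n : ℝ) + 1))
      = 12 * (√((n : ℝ) + 1) * √((n : ℝ) + 1)) by ring, h1]
    push_cast
    field_simp
  have hs := ENNReal.summable_toReal (ne_top_of_le_ne_top hfin (ENNReal.tsum_le_tsum h))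
  have h0 : ∀ n : ℕ, (0 : ℝ) ≤ 1 / 12 * (1 / ((n + 1 : ℕ) : ℝ)) := fun n => by positivity
  simp only [fun n => ENNReal.toReal_ofReal (h0 n)] at hs
  rw [summable_mul_left_iff (by norm_num)] at hs
  exact Real.not_summable_one_div_natCast ((summable_nat_add_iff 1).1 hs)

namespace FlowTree

variable {q : ℕ} (S : FlowTree q)

/-- The finite set of successors of a vertex. -/
noncomputable def children (x : S.V) : Finset S.V := (S.succ_finite x).toFinset

@[simp]
lemma mem_children {x y : S.V} : y ∈ S.children x ↔ S.pred y = x := by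
  simp [children]

lemma card_children (x : S.V) : (S.children x).card = q := by
  exact (Nat.card_eq_card_finite_toFinset (S.succ_finite x)).symm.trans (S.succ_card x)

lemma tsum_successors {E : Type*} [AddCommMonoid E] [TopologicalSpace E] [T2Space E]
    (f : S.V → E) (x : S.V) : ∑' y : {y | S.pred y = x}, f y.1 = ∑ y ∈ S.children x, f y := by
  have h : ((S.children x : Finset S.V) : Set S.V) = {y | S.pred y = x} := by
    ext; simp
  rw [← h]
  exact Finset.tsum_subtype' (S.children x) f

lemma level_iterate (n : ℕ) (x : S.V) : S.level (S.pred^[n] x) = S.level x + n := by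
  induction n with
  | zero => simp
  | succ n ih => rw [iterate_succ_apply', S.level_pred, ih]; push_cast; ring

lemma wR_pos (hq : 2 ≤ q) (x : S.V) : 0 < S.wR x := by
  have : (0 : ℝ) < q := by exact_mod_cast (by omega : 0 < q)
  exact zpow_pos this _

/-- The averaging operator `(Σ + Σ*) / 2` on real functions. -/
noncomputable def walkOp : Module.End ℝ (S.V → ℝ) where
  toFun f x := (f (S.pred x) + (q : ℝ)⁻¹ * ∑ c ∈ S.children x, f c) / 2
  map_add' f g := by
    ext x
    simp only [Pi.add_apply, Finset.sum_add_distrib]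
    ring
  map_smul' r f := by
    ext x
    simp only [Pi.smul_apply, smul_eq_mul, ← Finset.mul_sum, RingHom.id_apply]
    ring

lemma walkOp_apply (f : S.V → ℝ) (x : S.V) :
    S.walkOp f x = (f (S.pred x) + (q : ℝ)⁻¹ * ∑ c ∈ S.children x, f c) / 2 := rfl

lemma walkOp_mono : Monotone S.walkOp := by
  intro f g h x
  rw [walkOp_apply, walkOp_apply]
  have h1 := h (S.pred x)
  have h2 : (q : ℝ)⁻¹ * ∑ c ∈ S.children x, f c ≤ (q : ℝ)⁻¹ * ∑ c ∈ S.children x, g c :=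
    mul_le_mul_of_nonneg_left (Finset.sum_le_sum fun c _ => h c) (by positivity)
  linarith

lemma lapR_iterate (n : ℕ) (f : S.V → ℝ) : S.lapR^[n] f = ((1 - S.walkOp) ^ n) f := by
  have h : S.lapR = ⇑(1 - S.walkOp) := by
    funext f x
    simp only [lapR, sigStarR, LinearMap.sub_apply, Module.End.one_apply, Pi.sub_apply,
      walkOp_apply, tsum_successors]
  rw [h, Module.End.pow_apply]

/-- The `n`-step transition kernel of the random walk generated by `(Σ + Σ*) / 2`, as a density
with respect to the flow measure. -/
noncomputable def walkKer (n : ℕ) (x y : S.V) : ℝ := (S.walkOp ^ n) (S.deltaMu y) x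

lemma walkKer_succ (n : ℕ) (x y : S.V) :
    S.walkKer (n + 1) x y = (S.walkKer n (S.pred x) y
      + (q : ℝ)⁻¹ * ∑ c ∈ S.children x, S.walkKer n c y) / 2 := by
  rw [walkKer, pow_succ', Module.End.mul_apply, walkOp_apply]
  rfl

lemma deltaMu_nonneg (x y : S.V) : 0 ≤ S.deltaMu y x := by
  unfold deltaMu wR
  split_ifs <;> positivity

lemma walkKer_nonneg (n : ℕ) (x y : S.V) : 0 ≤ S.walkKer n x y := by
  induction n generalizing x with
  | zero => exact S.deltaMu_nonneg x y
  | succ n ih =>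
    rw [walkKer_succ]
    have h1 := ih (S.pred x)
    have h2 : 0 ≤ ∑ c ∈ S.children x, S.walkKer n c y := Finset.sum_nonneg fun c _ => ih c
    positivity

/-- The number of generations one has to go up from `y` to reach an ancestor of `x`. -/
noncomputable def ascent (y x : S.V) : ℕ :=
  sInf {k | ∃ j, S.pred^[j] x = S.pred^[k] y}

lemma exists_ascent (y x : S.V) : ∃ j, S.pred^[j] x = S.pred^[S.ascent y x] y := by
  have h : {k | ∃ j, S.pred^[j] x = S.pred^[k] y}.Nonempty := by
    obtain ⟨n, m, h, -⟩ := S.dist_spec x y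
    exact ⟨m, n, h⟩
  exact Nat.sInf_mem h

lemma ascent_iterate (y : S.V) (m : ℕ) : S.ascent y (S.pred^[m] y) = m := by
  refine le_antisymm (Nat.sInf_le ⟨0, rfl⟩) ?_
  obtain ⟨j, hj⟩ := S.exists_ascent y (S.pred^[m] y)
  have h := congrArg S.level hj
  simp only [level_iterate] at h
  omega

lemma ascent_pred {y x : S.V} (hx : ∀ k, x ≠ S.pred^[k] y) :
    S.ascent y (S.pred x) = S.ascent y x := by
  unfold ascent
  congr 1
  ext k
  constructor
  · rintro ⟨j, hj⟩
    exact ⟨j + 1, by rwa [iterate_succ_apply]⟩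
  · rintro ⟨j, hj⟩
    cases j with
    | zero => exact absurd hj (hx k)
    | succ j => exact ⟨j, by rwa [iterate_succ_apply] at hj⟩

/-- The probability that the random walk started at `x` ever visits `y`, up to a constant. -/
noncomputable def visit (y x : S.V) : ℝ := (q : ℝ)⁻¹ ^ S.ascent y x

lemma visit_nonneg (y x : S.V) : 0 ≤ S.visit y x := by
  unfold visit; positivity

lemma walkOp_visit_le (hq : 2 ≤ q) (y x : S.V) :
    (if x = y then 1 / 4 else 0) + S.walkOp (S.visit y) x ≤ S.visit y x := by
  have hq2 : (2 : ℝ) ≤ q := by exact_mod_cast hq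
  have hq0 : (0 : ℝ) < q := by linarith
  have hqi : (q : ℝ)⁻¹ ≤ 1 / 2 := by
    rw [one_div]; exact inv_anti₀ (by norm_num) hq2
  rw [walkOp_apply]
  by_cases hx : ∃ m, x = S.pred^[m] y
  · obtain ⟨m, rfl⟩ := hx
    have hp : S.visit y (S.pred (S.pred^[m] y)) = (q : ℝ)⁻¹ ^ (m + 1) := by
      rw [visit, ← iterate_succ_apply' S.pred, ascent_iterate]
    have hc : ∀ c ∈ S.children (S.pred^[m] y), (∀ k, c ≠ S.pred^[k] y) →
        S.visit y c = (q : ℝ)⁻¹ ^ m := by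
      intro c hc hk
      rw [visit, ← S.ascent_pred hk, S.mem_children.1 hc, ascent_iterate]
    have hv : S.visit y (S.pred^[m] y) = (q : ℝ)⁻¹ ^ m := by rw [visit, ascent_iterate]
    have hlev : ∀ c ∈ S.children (S.pred^[m] y), ∀ k, c = S.pred^[k] y → k + 1 = m := by
      intro c hc k hk
      have h := congrArg S.level (S.mem_children.1 hc)
      rw [hk, S.level_pred, level_iterate, level_iterate] at h
      omega
    rw [hp, hv]
    cases m with
    | zero =>
      have hs : ∑ c ∈ S.children (S.pred^[0] y), S.visit y c = q := by
        rw [Finset.sum_congr rfl fun c h => hc c h fun k hk => by have := hlev c h k hk; omega]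
        simp [card_children]
      rw [hs, inv_mul_cancel₀ hq0.ne']
      simp only [iterate_zero, id_eq, if_true, pow_zero, zero_add, pow_one]
      linarith
    | succ m =>
      have hne : S.pred^[m + 1] y ≠ y := by
        intro h
        have := congrArg S.level h
        rw [level_iterate] at this
        push_cast at this
        omega
      have hs : ∑ c ∈ S.children (S.pred^[m + 1] y), S.visit y c
          ≤ (q - 1) * (q : ℝ)⁻¹ ^ (m + 1) + (q : ℝ)⁻¹ ^ m := by
        have hmem : S.pred^[m] y ∈ S.children (S.pred^[m + 1] y) := by
          rw [mem_children, iterate_succ_apply']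
        rw [← Finset.sum_erase_add _ _ hmem]
        refine add_le_add (le_of_eq ?_) (le_of_eq ?_)
        · rw [Finset.sum_congr rfl fun c h => hc c (Finset.mem_of_mem_erase h) fun k hk => ?_]
          · rw [Finset.sum_const, Finset.card_erase_of_mem hmem, card_children, nsmul_eq_mul,
              Nat.cast_sub (by omega), Nat.cast_one]
          · have := hlev c (Finset.mem_of_mem_erase h) k hk
            obtain rfl : k = m := by omega
            exact Finset.ne_of_mem_erase h hk
        · rw [visit, ascent_iterate]
      have hs' := mul_le_mul_of_nonneg_left hs (inv_nonneg.2 hq0.le)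
      have e1 : (q : ℝ)⁻¹ * ((q - 1) * (q : ℝ)⁻¹ ^ (m + 1) + (q : ℝ)⁻¹ ^ m)
          = 2 * (q : ℝ)⁻¹ ^ (m + 1) - (q : ℝ)⁻¹ ^ (m + 1 + 1) := by
        linear_combination (q : ℝ)⁻¹ ^ (m + 1) * inv_mul_cancel₀ hq0.ne'
      rw [if_neg hne]
      linarith
  · push Not at hx
    have hc : ∀ c ∈ S.children x, S.visit y c = S.visit y x := by
      intro c hc
      have hpc := S.mem_children.1 hc
      rw [visit, ← S.ascent_pred (x := c) fun k hk => hx (k + 1) ?_, hpc, visit]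
      rw [iterate_succ_apply', ← hk, hpc]
    have hxy : x ≠ y := hx 0
    rw [if_neg hxy, Finset.sum_congr rfl hc, Finset.sum_const, card_children, nsmul_eq_mul,
      inv_mul_cancel_left₀ hq0.ne', visit, ascent_pred _ hx]
    unfold visit
    linarith

/-- The random walk is transient. -/
lemma sum_walkKer_le (hq : 2 ≤ q) (x y : S.V) (N : ℕ) :
    ∑ n ∈ Finset.range N, S.walkKer n x y ≤ 4 * (S.wR y)⁻¹ * S.visit y x := by
  set G : S.V → ℝ := (4 * (S.wR y)⁻¹) • S.visit y with hG
  have hw := S.wR_pos hq y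
  have hsup : S.deltaMu y + S.walkOp G ≤ G := by
    intro z
    have h := mul_le_mul_of_nonneg_left (S.walkOp_visit_le hq y z)
      (show 0 ≤ 4 * (S.wR y)⁻¹ by positivity)
    rw [hG, map_smul]
    simp only [Pi.add_apply, Pi.smul_apply, smul_eq_mul, deltaMu]
    refine le_trans (le_of_eq ?_) h
    split_ifs <;> ring
  have key : ∑ n ∈ Finset.range N, (S.walkOp ^ n) (S.deltaMu y) ≤ G := by
    induction N with
    | zero =>
      intro z
      simp only [Finset.range_zero, Finset.sum_empty, Pi.zero_apply, hG, Pi.smul_apply,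
        smul_eq_mul]
      have := S.visit_nonneg y z
      positivity
    | succ N ih =>
      rw [Finset.sum_range_succ']
      simp only [pow_succ', Module.End.mul_apply, pow_zero, Module.End.one_apply]
      rw [← map_sum, add_comm]
      exact (add_le_add le_rfl (S.walkOp_mono ih)).trans hsup
  have := key x
  simpa [Finset.sum_apply, walkKer, hG] using this

lemma summable_walkKer (hq : 2 ≤ q) (x y : S.V) : Summable fun n => S.walkKer n x y :=
  summable_of_sum_range_le (fun n => S.walkKer_nonneg n x y) fun N => S.sum_walkKer_le hq x y N

/-- The heat semigroup is obtained from the random walk by Poisson subordination. -/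
lemma hasSum_Hker (hq : 2 ≤ q) (t : ℝ) (x y : S.V) :
    HasSum (fun n : ℕ => Real.exp (-t) * (t ^ n / n.factorial * S.walkKer n x y))
      (S.Hker t x y) := by
  obtain ⟨C, hC⟩ : ∃ C, ∀ n, S.walkKer n x y ≤ C :=
    ⟨_, fun n => (S.summable_walkKer hq x y).le_tsum n fun j _ => S.walkKer_nonneg j x y⟩
  have hexp : ∀ s : ℝ, Summable fun n : ℕ => ‖s ^ n / (n.factorial : ℝ)‖ := fun s =>
    (Real.summable_pow_div_factorial s).norm
  have hker : Summable fun n : ℕ => ‖t ^ n / (n.factorial : ℝ) * S.walkKer n x y‖ := by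
    refine Summable.of_nonneg_of_le (fun n => norm_nonneg _) (fun n => ?_)
      ((hexp t).mul_right C)
    rw [norm_mul, Real.norm_of_nonneg (S.walkKer_nonneg n x y)]
    exact mul_le_mul_of_nonneg_left (hC n) (norm_nonneg _)
  have hH : S.Hker t x y = Real.exp (-t) * ∑' n : ℕ, t ^ n / n.factorial * S.walkKer n x y := by
    rw [Real.exp_eq_exp_ℝ, NormedSpace.exp_eq_tsum_div,
      tsum_mul_tsum_eq_tsum_sum_antidiagonal_of_summable_norm (hexp (-t)) hker, Hker]
    refine tsum_congr fun n => ?_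
    rw [lapR_iterate, sub_eq_neg_add, (Commute.one_right (-S.walkOp)).add_pow',
      LinearMap.sum_apply, Finset.sum_apply, Finset.mul_sum,
      ← Finset.Nat.sum_antidiagonal_swap]
    refine Finset.sum_congr rfl fun ⟨k, l⟩ hkl => ?_
    have hkl : k + l = n := Finset.HasAntidiagonal.mem_antidiagonal.1 hkl
    have hch := Nat.add_choose_mul_factorial_mul_factorial k l
    rw [hkl] at hch
    have hpow : (-S.walkOp) ^ l = ((-1 : ℝ) ^ l) • S.walkOp ^ l := by
      rw [← neg_one_smul ℝ S.walkOp, smul_pow]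
    simp only [Prod.fst_swap, Prod.snd_swap, one_pow, mul_one, hpow, walkKer,
      LinearMap.smul_apply, Pi.smul_apply, nsmul_eq_mul, smul_eq_mul, Module.End.mul_apply,
      Module.End.natCast_apply]
    have hsign : (-t) ^ l * (-1) ^ l = t ^ l := by rw [← mul_pow]; ring
    have hch' : (n.choose l : ℝ) * k.factorial * l.factorial = n.factorial := by
      exact_mod_cast hch
    have hn : (n.factorial : ℝ) ≠ 0 := by positivity
    have hk : (k.factorial : ℝ) ≠ 0 := by positivity
    have hl : (l.factorial : ℝ) ≠ 0 := by positivity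
    have hc : (n.choose l : ℝ) ≠ 0 := by
      exact_mod_cast (Nat.choose_pos (show l ≤ n by omega)).ne'
    have ht : (-t) ^ n = (-t) ^ k * (-t) ^ l := by rw [← hkl, pow_add]
    rw [ht, ← hsign, ← hch']
    field_simp
  rw [hH]
  exact hker.of_norm.hasSum.mul_left _

lemma hasSum_Kker (hq : 2 ≤ q) (x y : S.V) :
    HasSum (fun n : ℕ => invSqrtCoeff n * S.walkKer n x y) (S.Kker x y) := by
  set F : ℕ → ℝ → ℝ := fun n t =>
    S.walkKer n x y / n.factorial * (Real.exp (-t) * t ^ ((n + 1 / 2 : ℝ) - 1)) with hF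
  have hpos : ∀ n : ℕ, (0 : ℝ) < n + 1 / 2 := fun n => by positivity
  have hint : ∀ n, Integrable (F n) (volume.restrict (Ioi 0)) := fun n =>
    (Real.GammaIntegral_convergent (hpos n)).const_mul _
  have hval : ∀ n, ∫ t in Ioi (0 : ℝ), F n t =
      S.walkKer n x y / n.factorial * Real.Gamma (n + 1 / 2) := fun n => by
    rw [hF, integral_const_mul, Real.Gamma_eq_integral (hpos n)]
  have hnorm : ∀ n, ∫ t in Ioi (0 : ℝ), ‖F n t‖ = ∫ t in Ioi (0 : ℝ), F n t := fun n => by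
    refine setIntegral_congr_fun measurableSet_Ioi fun t ht => ?_
    have ht : (0 : ℝ) < t := ht
    have := S.walkKer_nonneg n x y
    exact Real.norm_of_nonneg (by simp only [hF]; positivity)
  have hcoef : ∀ n, (√Real.pi)⁻¹ * ∫ t in Ioi (0 : ℝ), F n t
      = invSqrtCoeff n * S.walkKer n x y := fun n => by
    rw [hval, invSqrtCoeff]; ring
  have hpi : (√Real.pi)⁻¹ ≠ 0 := inv_ne_zero (Real.sqrt_pos.2 Real.pi_pos).ne'
  have hsum : Summable fun n => ∫ t in Ioi (0 : ℝ), ‖F n t‖ := by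
    rw [← summable_mul_left_iff hpi]
    simp only [hnorm, hcoef]
    refine Summable.of_nonneg_of_le
      (fun n => mul_nonneg (invSqrtCoeff.pos n).le (S.walkKer_nonneg n x y)) (fun n => ?_)
      (S.summable_walkKer hq x y)
    exact mul_le_of_le_one_left (S.walkKer_nonneg n x y) (invSqrtCoeff.le_one n)
  have hmain := (hasSum_integral_of_summable_integral_norm hint hsum).mul_left (√Real.pi)⁻¹
  simp only [hcoef] at hmain
  have hK : S.Kker x y = (√Real.pi)⁻¹ * ∫ t in Ioi (0 : ℝ), ∑' n, F n t := by
    unfold Kker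
    congr 1
    refine setIntegral_congr_fun measurableSet_Ioi fun t ht => ?_
    have ht : (0 : ℝ) < t := ht
    refine (((S.hasSum_Hker hq t x y).mul_right (t ^ (-(1 : ℝ) / 2))).tsum_eq.symm).trans ?_
    refine tsum_congr fun n => ?_
    have hpow : t ^ ((n + 1 / 2 : ℝ) - 1) = t ^ n * t ^ (-(1 : ℝ) / 2) := by
      rw [← Real.rpow_natCast t n, ← Real.rpow_add ht]
      congr 1
      ring
    simp only [hF, hpow]
    ring
  rw [hK]
  exact hmain

/-- On functions annihilated by `Σ*`, the random walk on the tree acts through the killed walk. -/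
lemma sum_walkKer_horizontal (hq : 2 ≤ q) (g : S.V → ℂ)
    (hg : ∀ x, ∑ c ∈ S.children x, g c = 0) (s : Finset S.V) (hs : ∀ y ∉ s, g y = 0)
    (n : ℕ) (x : S.V) :
    ∑ y ∈ s, (S.walkKer n x y : ℂ) * g y * (S.wR y : ℂ)
      = ∑ j ∈ Finset.range (n + 1), killedWalk n j • g (S.pred^[j] x) := by
  induction n generalizing x with
  | zero =>
    have hw : (S.wR x : ℂ) ≠ 0 := by exact_mod_cast (S.wR_pos hq x).ne'
    have h : ∀ y ∈ s, (S.walkKer 0 x y : ℂ) * g y * (S.wR y : ℂ)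
        = if x = y then g x else 0 := by
      intro y _
      simp only [walkKer, pow_zero, Module.End.one_apply, deltaMu]
      split_ifs with hxy
      · subst hxy
        push_cast
        field_simp
      · simp
    rw [Finset.sum_congr rfl h, Finset.sum_ite_eq]
    simp only [zero_add, Finset.sum_range_one, killedWalk, one_smul, iterate_zero, id_eq]
    split_ifs with hx
    · rfl
    · exact (hs x hx).symm
  | succ n ih =>
    set V : ℕ → ℂ := fun j => Nat.casesOn j 0 fun i => g (S.pred^[i] x) with hV
    have hq0 : (q : ℂ) ≠ 0 := by exact_mod_cast (by omega : q ≠ 0)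
    have hchild : ∀ j, ∑ c ∈ S.children x, g (S.pred^[j] c) = q * V j := by
      intro j
      cases j with
      | zero => simpa [hV] using hg x
      | succ j =>
        rw [Finset.sum_congr rfl fun c hc => by
          rw [iterate_succ_apply, S.mem_children.1 hc], Finset.sum_const, card_children,
          nsmul_eq_mul]
    have hstep := killedWalk.sum_succ V rfl n
    have hL : ∑ y ∈ s, (S.walkKer (n + 1) x y : ℂ) * g y * (S.wR y : ℂ)
        = (∑ y ∈ s, (S.walkKer n (S.pred x) y : ℂ) * g y * (S.wR y : ℂ)
          + (q : ℂ)⁻¹ * ∑ c ∈ S.children x,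
            ∑ y ∈ s, (S.walkKer n c y : ℂ) * g y * (S.wR y : ℂ)) / 2 := by
      rw [Finset.sum_comm, Finset.mul_sum, ← Finset.sum_add_distrib, Finset.sum_div]
      refine Finset.sum_congr rfl fun y _ => ?_
      rw [walkKer_succ, ← Finset.sum_mul, ← Finset.sum_mul]
      push_cast
      ring
    rw [hL, ih]
    simp only [ih]
    rw [Finset.sum_comm]
    simp only [← Finset.smul_sum, hchild]
    refine Eq.trans ?_ hstep.symm
    have hV2 : ∀ j, V (j + 2) = g (S.pred^[j] (S.pred x)) := fun j => by
      rw [← iterate_succ_apply]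
    simp only [hV2, smul_add, Finset.sum_add_distrib, Complex.real_smul, Finset.mul_sum]
    rw [add_div, Finset.sum_div, Finset.sum_div]
    congr 1 <;>
    · refine Finset.sum_congr rfl fun j _ => ?_
      push_cast
      field_simp

/-- `𝓛^{-1/2}` applied to a horizontal function living on a single level. -/
lemma hasSum_Kker_horizontal (hq : 2 ≤ q) (g : S.V → ℂ)
    (hg : ∀ x, ∑ c ∈ S.children x, g c = 0) (s : Finset S.V) (hs : ∀ y ∉ s, g y = 0)
    {L : ℤ} (hL : ∀ y, g y ≠ 0 → S.level y = L) {x z : S.V} {N : ℕ} (hx : S.pred^[N] x = z)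
    (hz : g z ≠ 0) :
    HasSum (fun n : ℕ => ((invSqrtCoeff n * killedWalk n N : ℝ) : ℂ) * g z)
      (∑ y ∈ s, (S.Kker x y : ℂ) * g y * (S.wR y : ℂ)) := by
  have h := hasSum_sum (s := s) fun y _ =>
    ((Complex.hasSum_ofReal.2 (S.hasSum_Kker hq x y)).mul_right (g y)).mul_right (S.wR y : ℂ)
  refine h.congr_fun fun n => ?_
  have h1 : ∑ j ∈ Finset.range (n + 1), killedWalk n j • g (S.pred^[j] x)
      = killedWalk n N • g z := by
    rw [Finset.sum_eq_single N]
    · rw [hx]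
    · intro j _ hj
      by_contra hne
      have h2 : g (S.pred^[j] x) ≠ 0 := fun h => hne (by rw [h, smul_zero])
      have h3 := hL _ h2
      rw [← hL z hz, ← hx, level_iterate, level_iterate] at h3
      omega
    · intro hN
      rw [killedWalk.eq_zero_of_lt (by simpa using hN), zero_smul]
  rw [Complex.real_smul, ← S.sum_walkKer_horizontal hq g hg s hs n x] at h1
  push_cast
  rw [mul_assoc, ← h1, Finset.mul_sum]
  exact Finset.sum_congr rfl fun y _ => by ring

lemma w_eq_ofReal (hq : 2 ≤ q) (x : S.V) : S.w x = ENNReal.ofReal (S.wR x) := by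
  have h0 : (0 : ℝ) < q := by exact_mod_cast (by omega : 0 < q)
  rw [w, wR, ← Real.rpow_intCast, ← ENNReal.ofReal_rpow_of_pos h0, ENNReal.ofReal_natCast]

lemma sum_children_w (hq : 2 ≤ q) (x : S.V) : ∑ c ∈ S.children x, S.w c = S.w x := by
  have h0 : (q : ℝ) ≠ 0 := by exact_mod_cast (by omega : q ≠ 0)
  have h : ∀ c ∈ S.children x, S.w c = ENNReal.ofReal ((q : ℝ)⁻¹ * S.wR x) := by
    intro c hc
    rw [w_eq_ofReal S hq, ← S.mem_children.1 hc, wR, wR, S.level_pred, zpow_add_one₀ h0]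
    congr 1
    field_simp
  rw [Finset.sum_congr rfl h, Finset.sum_const, card_children, nsmul_eq_mul, w_eq_ofReal S hq,
    ← ENNReal.ofReal_natCast, ← ENNReal.ofReal_mul (by positivity), mul_inv_cancel_left₀ h0]

/-- The flow measure is preserved by taking predecessors. -/
lemma tsum_comp_pred (hq : 2 ≤ q) (F : S.V → ℝ≥0∞) :
    ∑' x, F (S.pred x) * S.w x = ∑' x, F x * S.w x := by
  rw [← (Equiv.sigmaFiberEquiv S.pred).tsum_eq, ENNReal.tsum_sigma']
  refine tsum_congr fun z => ?_
  have h : ∀ c : {c // S.pred c = z},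
      F (S.pred (Equiv.sigmaFiberEquiv S.pred ⟨z, c⟩)) * S.w (Equiv.sigmaFiberEquiv S.pred ⟨z, c⟩)
        = F z * S.w c.1 := fun c => by
    simp only [Equiv.sigmaFiberEquiv_apply, c.2]
  rw [tsum_congr h, ENNReal.tsum_mul_left]
  congr 1
  exact (S.tsum_successors S.w z).trans (S.sum_children_w hq z)

lemma tsum_comp_pred_iterate (hq : 2 ≤ q) (F : S.V → ℝ≥0∞) (N : ℕ) :
    ∑' x, F (S.pred^[N] x) * S.w x = ∑' x, F x * S.w x := by
  induction N with
  | zero => rfl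
  | succ N ih => exact (S.tsum_comp_pred hq fun x => F (S.pred^[N] x)).trans ih

/-- A function bounded below on each generation of descendants of `z` by a non-summable sequence
is not integrable. -/
lemma tsum_eq_top_of_descendants (hq : 2 ≤ q) (f : S.V → ℝ≥0∞) (z : S.V) (C : ℕ → ℝ≥0∞)
    (hC : ∑' N, C N = ∞) (hf : ∀ N x, S.pred^[N] x = z → C N ≤ f x) :
    ∑' x, f x * S.w x = ∞ := by
  have hw : S.w z ≠ 0 := by
    rw [w_eq_ofReal S hq, Ne, ENNReal.ofReal_eq_zero, not_le]
    exact S.wR_pos hq z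
  have hgen : ∀ N, ∑' x, (if S.pred^[N] x = z then C N else 0) * S.w x = C N * S.w z := by
    intro N
    rw [S.tsum_comp_pred_iterate hq (fun x => if x = z then C N else 0) N,
      tsum_eq_single z fun x hx => by simp [hx]]
    simp
  have hle : ∀ x, ∑' N, (if S.pred^[N] x = z then C N else 0) ≤ f x := by
    intro x
    by_cases hx : ∃ N, S.pred^[N] x = z
    · obtain ⟨N, hN⟩ := hx
      rw [tsum_eq_single N fun M hM => if_neg fun h => hM ?_, if_pos hN]
      · exact hf N x hN
      · have := congrArg S.level (h.trans hN.symm)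
        rw [level_iterate, level_iterate] at this
        omega
    · push Not at hx
      simp [hx]
  refine top_le_iff.1 ?_
  calc ∞ = ∑' N, C N * S.w z := by rw [ENNReal.tsum_mul_right, hC, ENNReal.top_mul hw]
    _ = ∑' N, ∑' x, (if S.pred^[N] x = z then C N else 0) * S.w x := by simp only [hgen]
    _ = ∑' x, (∑' N, if S.pred^[N] x = z then C N else 0) * S.w x := by
      rw [ENNReal.tsum_comm]
      simp only [ENNReal.tsum_mul_right]
    _ ≤ ∑' x, f x * S.w x := ENNReal.tsum_le_tsum fun x => mul_le_mul_left (hle x) _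

lemma tsum_Kker_horizontal_eq_top (hq : 2 ≤ q) (g : S.V → ℂ)
    (hg : ∀ x, ∑ c ∈ S.children x, g c = 0) (s : Finset S.V) (hs : ∀ y ∉ s, g y = 0)
    {L : ℤ} (hL : ∀ y, g y ≠ 0 → S.level y = L) {z : S.V} (hz : g z ≠ 0) :
    ∑' x, (‖∑' y, (S.Kker x y : ℂ) * g y * (S.wR y : ℂ)‖₊ : ℝ≥0∞) * S.w x = ∞ := by
  have hz' : (‖g z‖₊ : ℝ≥0∞) ≠ 0 := by simpa using hz
  refine S.tsum_eq_top_of_descendants hq _ z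
    (fun N => (∑' n, ENNReal.ofReal (invSqrtCoeff n * killedWalk n N)) * ‖g z‖₊) ?_ ?_
  · rw [ENNReal.tsum_mul_right, tsum_invSqrtCoeff_mul_killedWalk, ENNReal.top_mul hz']
  · intro N x hx
    rw [tsum_eq_sum (s := s) fun y hy => by rw [hs y hy]; simp]
    have h := S.hasSum_Kker_horizontal hq g hg s hs hL hx hz
    have hsum : Summable fun n => invSqrtCoeff n * killedWalk n N :=
      Complex.summable_ofReal.1 ((summable_mul_right_iff hz).1 h.summable)
    have hnn : ∀ n, 0 ≤ invSqrtCoeff n * killedWalk n N := fun n =>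
      mul_nonneg (invSqrtCoeff.pos n).le (killedWalk.nonneg n N)
    rw [← h.tsum_eq, tsum_mul_right, ← Complex.ofReal_tsum, nnnorm_mul, ENNReal.coe_mul,
      ← ENNReal.ofReal_tsum_of_nonneg hnn hsum]
    refine mul_le_mul_left (le_of_eq ?_) _
    rw [← enorm_eq_nnnorm, ← ofReal_norm, Complex.norm_real,
      Real.norm_of_nonneg (tsum_nonneg hnn)]

/-- The successors of a vertex form an admissible trapezoid. -/
lemma isAdmissibleTrapezoid_children (x : S.V) :
    S.IsAdmissibleTrapezoid (S.children x : Set S.V) := by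
  refine Or.inr ⟨x, 1, 2, one_pos, le_rfl, by norm_num, ?_⟩
  ext y
  simp only [Finset.mem_coe, mem_children, mem_ofPred_eq, le']
  constructor
  · rintro rfl
    have hle := S.dist_le y (S.pred y) 1 0 rfl
    have hne : S.dist y (S.pred y) ≠ 0 := fun h => by
      have h1 := congrArg S.level (S.eq_of_dist_eq_zero _ _ h)
      rw [S.level_pred] at h1
      omega
    rw [S.level_pred, S.dist_comm]
    refine ⟨?_, ?_, ?_⟩ <;> push_cast <;> omega
  · rintro ⟨h, h1, h2⟩
    rw [S.dist_comm] at h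
    push_cast at h1 h2
    obtain ⟨n, m, hnm, hd⟩ := S.dist_spec y x
    have h3 := congrArg S.level hnm
    rw [level_iterate, level_iterate] at h3
    obtain rfl : n = 1 := by omega
    obtain rfl : m = 0 := by omega
    exact hnm

lemma muS_children (hq : 2 ≤ q) (x : S.V) : S.muS (S.children x : Set S.V) = S.w x :=
  (Finset.tsum_subtype' (S.children x) S.w).trans (S.sum_children_w hq x)

/-- The difference of two siblings, suitably normalized, is an atom. -/
lemma isOneInftyAtom_sub_siblings (hq : 2 ≤ q) {p p' : S.V} (hp : S.pred p' = S.pred p)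
    (hne : p' ≠ p) :
    S.IsOneInftyAtom fun x => ((S.wR (S.pred p))⁻¹ : ℂ) *
      ((if x = p then 1 else 0) - if x = p' then 1 else 0) := by
  have hw := S.wR_pos hq (S.pred p)
  have hsupp : ∀ x, x ∉ ({p, p'} : Finset S.V) →
      ((S.wR (S.pred p))⁻¹ : ℂ) * ((if x = p then 1 else 0) - if x = p' then 1 else 0) = 0 := by
    intro x hx
    simp only [Finset.mem_insert, Finset.mem_singleton, not_or] at hx
    simp [hx.1, hx.2]
  refine ⟨_, S.isAdmissibleTrapezoid_children (S.pred p), fun x hx => ?_, ?_, fun x => ?_⟩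
  · have h : x ∈ ({p, p'} : Finset S.V) := by_contra fun h => hx (hsupp x h)
    simp only [Finset.mem_insert, Finset.mem_singleton] at h
    rw [Finset.mem_coe, mem_children]
    rcases h with rfl | rfl
    · rfl
    · exact hp
  · have hwp : S.wR p' = S.wR p := by
      have := congrArg S.level hp
      rw [S.level_pred, S.level_pred] at this
      rw [wR, wR, show S.level p' = S.level p by omega]
    rw [tsum_eq_sum (s := {p, p'}) fun x hx => by
        simp only [hsupp x hx, zero_mul],
      Finset.sum_pair hne.symm, hwp]
    simp [hne, hne.symm]
  · rw [muS_children S hq, w_eq_ofReal S hq, ← ENNReal.ofReal_inv_of_pos hw, ← enorm_eq_nnnorm,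
      ← ofReal_norm]
    refine ENNReal.ofReal_le_ofReal ?_
    have h1 : ‖((if x = p then 1 else 0) - if x = p' then 1 else 0 : ℂ)‖ ≤ 1 := by
      split_ifs with h h' h'
      · exact absurd (h'.symm.trans h) hne
      all_goals simp
    rw [norm_mul, norm_inv, Complex.norm_real, Real.norm_of_nonneg hw.le]
    exact mul_le_of_le_one_right (by positivity) h1

end FlowTree

/-- if `ε` is not identically zero, there is a `(1,∞)`-atom `a` with
`Σ_x |𝓡_ε* a(x)| μ(x) = +∞`; in particular `𝓡_ε*` does not map `H¹(μ)` into `L¹(μ)`. -/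
theorem hRieszStar_not_H1_L1 {q : ℕ} (hq : 2 ≤ q) (S : FlowTree q)
    (eps : S.V → ℂ) (hb : ∃ M : ℝ, ∀ x, ‖eps x‖ ≤ M)
    (hz : ∀ x : S.V, ∑' y : {y | S.pred y = x}, eps y.1 = 0)
    (hne : ∃ x, eps x ≠ 0) :
    ∃ a : S.V → ℂ, S.IsOneInftyAtom a ∧
      ∑' x, (‖∑' y, (S.Kker x y : ℂ) * S.hgradStar eps a y * (S.wR y : ℂ)‖₊ : ℝ≥0∞)
        * S.w x = ∞ := by
  obtain ⟨z, hz0⟩ := hne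
  set p := S.pred z with hpz
  obtain ⟨p', hp', hpp⟩ : ∃ p' ∈ S.children (S.pred p), p' ≠ p :=
    Finset.exists_mem_ne (by rw [S.card_children]; omega) p
  have hp' : S.pred p' = S.pred p := S.mem_children.1 hp'
  refine ⟨_, S.isOneInftyAtom_sub_siblings hq hp' hpp, ?_⟩
  set a : S.V → ℂ := fun x => ((S.wR (S.pred p))⁻¹ : ℂ) *
      ((if x = p then 1 else 0) - if x = p' then 1 else 0) with ha
  have hw : (S.wR (S.pred p) : ℂ) ≠ 0 := by exact_mod_cast (S.wR_pos hq _).ne'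
  have hsupp : ∀ y, S.hgradStar eps a y ≠ 0 → S.pred y = p ∨ S.pred y = p' := by
    intro y hy
    by_contra hcon
    simp only [not_or] at hcon
    exact hy (by simp [FlowTree.hgradStar, ha, hcon.1, hcon.2])
  refine S.tsum_Kker_horizontal_eq_top hq (S.hgradStar eps a) (fun x => ?_)
    (S.children p ∪ S.children p') (fun y hy => ?_) (L := S.level z) (fun y hy => ?_) (z := z) ?_
  · have h : ∀ c ∈ S.children x, S.hgradStar eps a c = (starRingEnd ℂ) (eps c) * a x :=
      fun c hc => by rw [FlowTree.hgradStar, S.mem_children.1 hc]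
    rw [Finset.sum_congr rfl h, ← Finset.sum_mul, ← map_sum, ← S.tsum_successors eps x, hz x,
      map_zero, zero_mul]
  · by_contra hne
    refine hy ?_
    simpa using hsupp y hne
  · have h1 := S.level_pred y
    have h2 := S.level_pred z
    have h3 := congrArg S.level hp'
    rw [S.level_pred, S.level_pred] at h3
    rcases hsupp y hy with h | h <;> rw [h] at h1 <;> rw [← hpz] at h2 <;> omega
  · have haz : a p ≠ 0 := by simp [ha, hpp.symm, hw]
    exact mul_ne_zero ((map_ne_zero _).2 hz0) haz
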